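/- For the weight a = (4,6,7) (the weight of the Q₁₁-singularity), there exist 3×3 matrices C and D with non-negative integer entries such that |det D| = 1, B_a = C·D, (4,6,7) = (1,1,1)·D, and f_C has an isolated critical point at the origin of ℂ³ (all partial derivatives of f_C vanish at 0, and there is a punctured neighborhood of 0 containing no critical point of f_C); moreover any such C satisfies |det C| = 18. -/

import Mathlib

open Matrix BigOperators

noncomputable section

/-- `f_C(x,y,z) = Σ_{i=1}^{3} x^{c_{i1}} y^{c_{i2}} z^{c_{i3}}` for a 3×3 matrix `C`
with non-negative integer entries. -/
def fC (C : Matrix (Fin 3) (Fin 3) ℕ) : (Fin 3 → ℂ) → ℂ :=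
  fun v => ∑ i : Fin 3, ∏ j : Fin 3, v j ^ C i j

/-- `φ_D(u₁,u₂,u₃) = (u₁^{d_{i1}} u₂^{d_{i2}} u₃^{d_{i3}})_{i=1}^{3}`. -/
def phiD (D : Matrix (Fin 3) (Fin 3) ℕ) : (Fin 3 → ℂ) → (Fin 3 → ℂ) :=
  fun u i => ∏ j : Fin 3, u j ^ D i j

/-- The matrix `B_a` with rows `(a₁+1,a₂,a₃)`, `(a₁,a₂+1,a₃)`, `(a₁,a₂,a₃+1)`. -/
def Bmat (a : Fin 3 → ℕ) : Matrix (Fin 3) (Fin 3) ℕ :=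
  fun i j => a j + if i = j then 1 else 0

/-- `G_a(u₁,u₂,u₃) = u₁^{a₁+1}u₂^{a₂}u₃^{a₃} + u₁^{a₁}u₂^{a₂+1}u₃^{a₃} + u₁^{a₁}u₂^{a₂}u₃^{a₃+1}`. -/
def Ga (a : Fin 3 → ℕ) : (Fin 3 → ℂ) → ℂ :=
  fun u => u 0 ^ (a 0 + 1) * u 1 ^ a 1 * u 2 ^ a 2
         + u 0 ^ a 0 * u 1 ^ (a 1 + 1) * u 2 ^ a 2
         + u 0 ^ a 0 * u 1 ^ a 1 * u 2 ^ (a 2 + 1)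

/-- `H_a(u₁,u₂,u₃) = u₁^{a₁}u₂^{a₂}u₃^{a₃}`. -/
def Ha (a : Fin 3 → ℕ) : (Fin 3 → ℂ) → ℂ :=
  fun u => u 0 ^ a 0 * u 1 ^ a 1 * u 2 ^ a 2

/-- Determinant of a matrix of natural numbers, computed over `ℤ`. -/
def detZ (M : Matrix (Fin 3) (Fin 3) ℕ) : ℤ :=
  (M.map (fun n : ℕ => (n : ℤ))).det

/-- `f` has an isolated critical point at the origin of `ℂ³`: the derivative of `f`
vanishes at `0`, and there is a punctured neighborhood of `0` containing no critical
point of `f`. -/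
def IsolatedCriticalAtZero (f : (Fin 3 → ℂ) → ℂ) : Prop :=
  fderiv ℂ f 0 = 0 ∧
  ∃ ε : ℝ, ε > 0 ∧ ∀ p : Fin 3 → ℂ, p ≠ 0 → ‖p‖ < ε → fderiv ℂ f p ≠ 0

/-!
Any factorisation `B_a = C * D` with `|det D| = 1` forces `|det C| = |det B_a|`, and `B_a` is the
identity plus a matrix of rank one, so `det B_a = 1 + a₁ + a₂ + a₃`; for `(4, 6, 7)` this is `18`.

For existence, `(4, 6, 8) = 2 • (2, 3, 4)`, `(5, 6, 7) = (2, 3, 4) + 3 • (1, 1, 1)` and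
`(4, 7, 7) = (1, 1, 1) + 3 • (1, 2, 2)` factor `B_a` through the exponents of `x² + x y³ + y z³`.
This polynomial is of chain type, and the gradient of `x^a + x y^b + y z^c` with `a > 1` and
`b, c > 0` vanishes only at the origin: the last partial derivative forces `y = 0` or `z = 0`, and
the other two then make all three coordinates vanish.
-/

theorem detZ_mul (C D : Matrix (Fin 3) (Fin 3) ℕ) : detZ (C * D) = detZ C * detZ D := by
  simpa only [detZ, Nat.coe_castRingHom, det_mul] using
    congrArg det (Matrix.map_mul (L := C) (M := D) (f := Nat.castRingHom ℤ))

theorem detZ_Bmat (a : Fin 3 → ℕ) : detZ (Bmat a) = 1 + ∑ i, (a i : ℤ) := by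
  have rank_one_update : (Bmat a).map (fun n : ℕ ↦ (n : ℤ)) =
      1 + replicateCol Unit (1 : Fin 3 → ℤ) * replicateRow Unit (fun i ↦ (a i : ℤ)) := by
    ext i j
    simp [Bmat, Matrix.mul_apply, Matrix.one_apply, add_comm]
  rw [detZ, rank_one_update, det_one_add_replicateCol_mul_replicateRow, dotProduct_one]

theorem abs_detZ_of_Bmat_eq_mul {a : Fin 3 → ℕ} {C D : Matrix (Fin 3) (Fin 3) ℕ}
    (hD : |detZ D| = 1) (hB : Bmat a = C * D) : |detZ C| = 1 + ∑ i, (a i : ℤ) :=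
  calc
    |detZ C| = |detZ (Bmat a)| := by rw [hB, detZ_mul, abs_mul, hD, mul_one]
    _ = 1 + ∑ i, (a i : ℤ) := by rw [detZ_Bmat, abs_of_nonneg (by positivity)]

theorem hasFDerivAt_fC (C : Matrix (Fin 3) (Fin 3) ℕ) (p : Fin 3 → ℂ) :
    HasFDerivAt (fC C)
      (∑ i, ∑ j, (∏ k ∈ Finset.univ.erase j, p k ^ C i k) •
        (C i j * p j ^ (C i j - 1)) • ContinuousLinearMap.proj (R := ℂ) (φ := fun _ ↦ ℂ) j) p := by
  refine HasFDerivAt.fun_sum fun i _ ↦ HasFDerivAt.finsetProd fun j _ ↦ ?_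
  simpa only [nsmul_eq_mul] using
    (hasFDerivAt_apply (𝕜 := ℂ) (F' := fun _ ↦ ℂ) j p).pow (C i j)

theorem fderiv_fC_eq_zero_iff (C : Matrix (Fin 3) (Fin 3) ℕ) (p : Fin 3 → ℂ) :
    fderiv ℂ (fC C) p = 0 ↔
      ∀ j, ∑ i, C i j * p j ^ (C i j - 1) * ∏ k ∈ Finset.univ.erase j, p k ^ C i k = 0 := by
  rw [(hasFDerivAt_fC C p).fderiv, ← ContinuousLinearMap.coe_inj, LinearMap.pi_ext'_iff]
  simp [LinearMap.ext_ring_iff, Pi.single_apply, mul_comm]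

/-- The exponent matrix of the chain-type polynomial `x ^ a + x * y ^ b + y * z ^ c`. The pure power
comes last because the rows then match those of `Bmat ![4, 6, 7]`. -/
def chainMatrix (a b c : ℕ) : Matrix (Fin 3) (Fin 3) ℕ :=
  !![1, b, 0; 0, 1, c; a, 0, 0]

theorem fderiv_fC_chainMatrix_eq_zero_iff_gradient (a b c : ℕ) (p : Fin 3 → ℂ) :
    fderiv ℂ (fC (chainMatrix a b c)) p = 0 ↔
      p 1 ^ b + a * p 0 ^ (a - 1) = 0 ∧
      b * p 1 ^ (b - 1) * p 0 + p 2 ^ c = 0 ∧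
      c * p 2 ^ (c - 1) * p 1 = 0 := by
  have erase_zero : Finset.univ.erase (0 : Fin 3) = {1, 2} := by decide
  have erase_one : Finset.univ.erase (1 : Fin 3) = {0, 2} := by decide
  have erase_two : Finset.univ.erase (2 : Fin 3) = {0, 1} := by decide
  rw [fderiv_fC_eq_zero_iff]
  simp [Fin.forall_fin_succ, erase_zero, erase_one, erase_two, chainMatrix, Fin.sum_univ_three]

theorem eq_zero_of_chain_gradient_eq_zero {R : Type*} [Semiring R] [NoZeroDivisors R] [CharZero R]
    {a b c : ℕ} (ha : 1 < a) (hb : b ≠ 0) (hc : c ≠ 0) {x y z : R}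
    (hx : y ^ b + a * x ^ (a - 1) = 0) (hy : b * y ^ (b - 1) * x + z ^ c = 0)
    (hz : c * z ^ (c - 1) * y = 0) : x = 0 ∧ y = 0 ∧ z = 0 := by
  have of_y_eq_zero (y_eq : y = 0) : x = 0 ∧ y = 0 ∧ z = 0 := by
    have x_eq : x = 0 := eq_zero_of_pow_eq_zero (by simpa [y_eq, hb, ne_zero_of_lt ha] using hx)
    exact ⟨x_eq, y_eq, by simpa [x_eq, hc] using hy⟩
  rcases mul_eq_zero.1 hz with h | y_eq
  · have z_eq : z = 0 :=
      eq_zero_of_pow_eq_zero ((mul_eq_zero_iff_left (Nat.cast_ne_zero.2 hc)).1 h)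
    have hxy : b * y ^ (b - 1) * x = 0 := by simpa only [z_eq, zero_pow hc, add_zero] using hy
    rcases mul_eq_zero.1 hxy with h | x_eq
    · exact of_y_eq_zero
        (eq_zero_of_pow_eq_zero ((mul_eq_zero_iff_left (Nat.cast_ne_zero.2 hb)).1 h))
    · exact of_y_eq_zero (by simpa [x_eq, hb, Nat.sub_ne_zero_of_lt ha] using hx)
  · exact of_y_eq_zero y_eq

theorem fderiv_fC_chainMatrix_eq_zero_iff {a b c : ℕ} (ha : 1 < a) (hb : b ≠ 0) (hc : c ≠ 0)
    {p : Fin 3 → ℂ} : fderiv ℂ (fC (chainMatrix a b c)) p = 0 ↔ p = 0 := by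
  rw [fderiv_fC_chainMatrix_eq_zero_iff_gradient]
  constructor
  · rintro ⟨hx, hy, hz⟩
    obtain ⟨hp₀, hp₁, hp₂⟩ := eq_zero_of_chain_gradient_eq_zero ha hb hc hx hy hz
    ext i
    fin_cases i <;> assumption
  · rintro rfl
    simp [hb, hc, Nat.sub_ne_zero_of_lt ha]

theorem isolatedCriticalAtZero_fC_chainMatrix {a b c : ℕ} (ha : 1 < a) (hb : b ≠ 0) (hc : c ≠ 0) :
    IsolatedCriticalAtZero (fC (chainMatrix a b c)) :=
  ⟨(fderiv_fC_chainMatrix_eq_zero_iff ha hb hc).2 rfl, 1, one_pos,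
    fun _ hp _ ↦ mt (fderiv_fC_chainMatrix_eq_zero_iff ha hb hc).1 hp⟩

theorem stmt_16_general :
    (∃ C D : Matrix (Fin 3) (Fin 3) ℕ,
      |detZ D| = 1 ∧
      Bmat ![4, 6, 7] = C * D ∧
      (∀ j, (∑ i : Fin 3, D i j) = ![4, 6, 7] j) ∧
      IsolatedCriticalAtZero (fC C)) ∧
    (∀ (a : Fin 3 → ℕ) (C D : Matrix (Fin 3) (Fin 3) ℕ),
      |detZ D| = 1 → Bmat a = C * D → |detZ C| = 1 + ∑ i, (a i : ℤ)) := by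
  refine ⟨⟨chainMatrix 2 3 3, !![2, 3, 4; 1, 1, 1; 1, 2, 2], ?_, by decide, by decide, ?_⟩,
    fun _ _ _ ↦ abs_detZ_of_Bmat_eq_mul⟩
  · simp [detZ, det_fin_three]
  · exact isolatedCriticalAtZero_fC_chainMatrix (by decide) (by decide) (by decide)

theorem stmt_16 :
    (∃ C D : Matrix (Fin 3) (Fin 3) ℕ,
      |detZ D| = 1 ∧
      Bmat ![4, 6, 7] = C * D ∧
      (∀ j, (∑ i : Fin 3, D i j) = ![4, 6, 7] j) ∧
      IsolatedCriticalAtZero (fC C)) ∧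
    (∀ C D : Matrix (Fin 3) (Fin 3) ℕ,
      |detZ D| = 1 →
      Bmat ![4, 6, 7] = C * D →
      (∀ j, (∑ i : Fin 3, D i j) = ![4, 6, 7] j) →
      IsolatedCriticalAtZero (fC C) →
      |detZ C| = 18) :=
  ⟨stmt_16_general.1, fun C D hD hB _ _ ↦ by
    simpa [Fin.sum_univ_three] using stmt_16_general.2 _ C D hD hB⟩
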